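/- (L² bound for the ansatz operator, d = 2.) There exists a constant C > 0, independent of ε and n, such that for every ε ∈ (0,1), every n ≥ 1 and every symmetric ψ ∈ ΓL²_n with ‖(−L₀)^{1/2}ψ‖ < ∞: ‖S^ε A⁺_ε ψ‖ ≤ C λ_ε n ‖(−L₀)^{1/2} ψ‖, where the Fock norm on the left is ‖f‖² = (n+1)! Σ |f|² and S^ε is applied on ΓL²_{n+1} (the right-hand side corresponds to C λ_ε ‖N(−L₀)^{1/2}ψ‖ with N the number operator). -/

import Mathlib

open scoped BigOperators
open scoped Classical

noncomputable section

namespace SBE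

/-- Lattice points of `ℤ^d`. -/
abbrev ZLat (d : ℕ) := Fin d → ℤ

/-- Kernels of the `n`-th chaos: functions on `n`-tuples of lattice points. -/
abbrev Chaos (d n : ℕ) := (Fin n → ZLat d) → ℂ

/-- Squared Euclidean norm of a lattice point. -/
def nsq {d : ℕ} (k : ZLat d) : ℝ := ∑ i, ((k i : ℝ))^2

/-- Euclidean norm of a lattice point. -/
def eN {d : ℕ} (k : ZLat d) : ℝ := Real.sqrt (nsq k)

/-- Supremum norm of a lattice point. -/
def sN {d : ℕ} (k : ZLat d) : ℝ := ((Finset.univ.sup fun i => (k i).natAbs : ℕ) : ℝ)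

/-- The norm used in the Fourier cutoff: Euclidean if `d = 2`, supremum otherwise. -/
def cutNorm (d : ℕ) (k : ZLat d) : ℝ := if d = 2 then eN k else sN k

/-- `w · k`. -/
def dotw {d : ℕ} (w : Fin d → ℝ) (k : ZLat d) : ℝ := ∑ i, w i * (k i : ℝ)

/-- `|k_{1:n}|² = Σ_i |k_i|²`. -/
def wSq {d n : ℕ} (k : Fin n → ZLat d) : ℝ := ∑ a, nsq (k a)

/-- The coupling constant `λ_ε`. -/
def lam (d : ℕ) (ε : ℝ) : ℝ :=
  if d = 2 then (Real.sqrt (Real.log (1 / ε^2)))⁻¹ else ε ^ ((d:ℝ)/2 - 1)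

/-- The Fourier cutoff indicator `J^ε_{ℓ,m}`. -/
def Jind (d : ℕ) (ε : ℝ) (l m : ZLat d) : ℝ :=
  if 0 < ε * cutNorm d l ∧ ε * cutNorm d l ≤ 1 ∧
     0 < ε * cutNorm d m ∧ ε * cutNorm d m ≤ 1 ∧
     0 < ε * cutNorm d (l + m) ∧ ε * cutNorm d (l + m) ≤ 1 then 1 else 0

/-- Symmetry of a kernel under permutation of its arguments. -/
def Symm {d n : ℕ} (f : Chaos d n) : Prop :=
  ∀ (σ : Equiv.Perm (Fin n)) (k : Fin n → ZLat d), f (k ∘ σ) = f k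

/-- A kernel vanishes whenever one of its arguments is the zero frequency
(i.e. it is really a function on `(ℤ^d_0)^n`). -/
def SuppOk {d n : ℕ} (f : Chaos d n) : Prop :=
  ∀ k : Fin n → ZLat d, (∃ a, k a = 0) → f k = 0

/-- Summand of `‖(-L₀)^s f‖²`. -/
def sobTerm {d n : ℕ} (s : ℝ) (f : Chaos d n) (k : Fin n → ZLat d) : ℝ :=
  (wSq k / 2) ^ (2*s) * ‖f k‖^2

/-- `‖(-L₀)^s f‖² = n! Σ_k (|k_{1:n}|²/2)^{2s} |f(k)|²`. -/
def sobSq {d n : ℕ} (s : ℝ) (f : Chaos d n) : ℝ := (n.factorial : ℝ) * ∑' k, sobTerm s f k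

/-- Remove the entries `i < j` from an `(n+2)`-tuple (order preservingly). -/
def remove2 {X : Type*} {n : ℕ} (k : Fin (n+2) → X) (i j : Fin (n+2)) (h : i < j) :
    Fin n → X :=
  fun a => k (j.succAbove ((Fin.castLT i
    (Nat.lt_of_lt_of_le (Fin.lt_def.mp h) (Nat.lt_succ_iff.mp j.isLt))).succAbove a))

/-- The operator `A⁺_ε : ΓL²_{n+1} → ΓL²_{n+2}`. -/
def Aplus (d : ℕ) (w : Fin d → ℝ) (ε : ℝ) {n : ℕ} (f : Chaos d (n+1)) : Chaos d (n+2) :=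
  fun k => -(2 * Complex.I / (((2*Real.pi) ^ ((d:ℝ)/2) : ℝ) : ℂ)) *
      ((lam d ε / ((n:ℝ)+2) : ℝ) : ℂ) *
    ∑ i : Fin (n+2), ∑ j : Fin (n+2),
      if h : i < j then
        ((dotw w (k i + k j) : ℝ) : ℂ) * ((Jind d ε (k i) (k j) : ℝ) : ℂ) *
          f (Fin.cons (k i + k j) (remove2 k i j h))
      else 0

/-- The operator `A⁻_ε : ΓL²_{n+2} → ΓL²_{n+1}`. -/
def Aminus (d : ℕ) (w : Fin d → ℝ) (ε : ℝ) {n : ℕ} (f : Chaos d (n+2)) : Chaos d (n+1) :=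
  fun k => (2 * Complex.I / (((2*Real.pi) ^ ((d:ℝ)/2) : ℝ) : ℂ)) *
      ((((n:ℝ)+2) * lam d ε : ℝ) : ℂ) *
    ∑ j : Fin (n+1), ((dotw w (k j) : ℝ) : ℂ) *
      ∑' l : ZLat d, ((Jind d ε l (k j - l) : ℝ) : ℂ) *
        f (Fin.cons l (Fin.cons (k j - l) (fun a => k (j.succAbove a))))

/-- `L^ε(x) = λ_ε² log(1 + 1/(ε²x))`. -/
def Leps (ε x : ℝ) : ℝ := (lam 2 ε)^2 * Real.log (1 + 1/(ε^2 * x))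

/-- `G(x) = c⁻¹ [(3cx/(2π) + 1)^{2/3} − 1]` (with `c = |w|²`). -/
def Gfun (c x : ℝ) : ℝ := c⁻¹ * ((3*c*x/(2*Real.pi) + 1) ^ ((2:ℝ)/3) - 1)

/-- `|w|²`. -/
def wnSq {d : ℕ} (w : Fin d → ℝ) : ℝ := ∑ i, (w i)^2

/-- `(w·k)²_{1:n} = Σ_i (w·k_i)²`. -/
def wdotSq {d n : ℕ} (w : Fin d → ℝ) (k : Fin n → ZLat d) : ℝ := ∑ a, (dotw w (k a))^2

/-- Fourier multiplier of `S^ε = (−L₀ − L₀^w G^ε)⁻¹`. -/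
def sigma' {n : ℕ} (w : Fin 2 → ℝ) (ε : ℝ) (k : Fin n → ZLat 2) : ℝ :=
  2 / (wSq k + wdotSq w k * Gfun (wnSq w) (Leps ε (wSq k / 2)))

/-- The operator `S^ε` acting diagonally on a kernel. -/
def SepsA (w : Fin 2 → ℝ) (ε : ℝ) {n : ℕ} (g : Chaos 2 n) : Chaos 2 n :=
  fun k => ((sigma' w ε k : ℝ) : ℂ) * g k

/-!
The correction `G` is nonnegative, so the multiplier of `S^ε` is dominated by that of `(−L₀)⁻¹`,
that is by `2 / |k|²`. For `ψ` in the chaos of order `n + 1`, the pair `i < j` contributes at most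
`|w| |k_i + k_j| |ψ(k_i + k_j, …)|` to the sum defining `A⁺ψ(k)`, and the factor `(n + 2)²` lost by
applying Cauchy–Schwarz to this sum is absorbed by its prefactor `λ_ε / (n + 2)`. For a fixed
pair, `k ↦ (k_i, (k_i + k_j, …))` is injective, and bounding `|k|⁻⁴` by `|k_i|⁻⁴`, which is
summable over the lattice in dimension `d < 4`, decouples `k_i` from the arguments of `ψ`. What is
left is `∑ |k_1|² |ψ(k)|²`, which by symmetry is `∑ |k|² |ψ(k)|²` divided by `n + 1`; this gain
leaves the order `n` in the bound.
-/

section Lattice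

variable {d n : ℕ}

lemma nsq_nonneg (k : ZLat d) : 0 ≤ nsq k :=
  Finset.sum_nonneg fun _ _ => sq_nonneg _

lemma nsq_eq_norm_sq (k : ZLat d) : nsq k = ‖WithLp.toLp 2 fun i => (k i : ℝ)‖ ^ 2 := by
  simp [nsq, EuclideanSpace.norm_sq_eq]

lemma nsq_pos {k : ZLat d} (hk : k ≠ 0) : 0 < nsq k := by
  obtain ⟨i, hi⟩ := Function.ne_iff.1 hk
  have hi' : (k i : ℝ) ≠ 0 := Int.cast_ne_zero.2 hi
  exact Finset.sum_pos' (fun _ _ => sq_nonneg _) ⟨i, Finset.mem_univ i, by positivity⟩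

lemma wSq_nonneg (k : Fin n → ZLat d) : 0 ≤ wSq k :=
  Finset.sum_nonneg fun _ _ => nsq_nonneg _

lemma nsq_le_wSq (k : Fin n → ZLat d) (a : Fin n) : nsq (k a) ≤ wSq k :=
  Finset.single_le_sum (f := fun a => nsq (k a)) (fun _ _ => nsq_nonneg _) (Finset.mem_univ a)

lemma wnSq_nonneg (w : Fin d → ℝ) : 0 ≤ wnSq w :=
  Finset.sum_nonneg fun _ _ => sq_nonneg _

lemma dotw_sq_le (w : Fin d → ℝ) (k : ZLat d) : dotw w k ^ 2 ≤ wnSq w * nsq k :=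
  Finset.sum_mul_sq_le_sq_mul_sq _ _ _

lemma wdotSq_nonneg (w : Fin d → ℝ) (k : Fin n → ZLat d) : 0 ≤ wdotSq w k :=
  Finset.sum_nonneg fun _ _ => sq_nonneg _

lemma wdotSq_le (w : Fin d → ℝ) (k : Fin n → ZLat d) : wdotSq w k ≤ wnSq w * wSq k := by
  rw [wSq, Finset.mul_sum]
  exact Finset.sum_le_sum fun a _ => dotw_sq_le w (k a)

lemma summable_inv_nsq_pow {m : ℕ} (h : d < 2 * m) :
    Summable fun k : ZLat d => (nsq k)⁻¹ ^ m := by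
  let b := (EuclideanSpace.basisFun (Fin d) ℝ).toBasis
  let bℤ := b.restrictScalars ℤ
  have hrank : Module.finrank ℤ (Submodule.span ℤ (Set.range b)) < 2 * m := by
    rwa [Module.finrank_eq_card_basis bℤ, Fintype.card_fin]
  have hcoe (k : ZLat d) : (bℤ.equivFun.symm k : EuclideanSpace ℝ (Fin d)) =
      WithLp.toLp 2 fun i => (k i : ℝ) := by
    ext i
    have hrepr := b.restrictScalars_repr_apply ℤ (bℤ.equivFun.symm k) i
    rw [← Module.Basis.equivFun_apply bℤ, LinearEquiv.apply_symm_apply] at hrepr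
    exact hrepr.symm
  refine ((ZLattice.summable_norm_pow_inv _ _ hrank).comp_injective
    bℤ.equivFun.symm.injective).congr fun k => ?_
  rw [Function.comp_apply, Submodule.coe_norm, hcoe, pow_mul, inv_pow, ← nsq_eq_norm_sq]

end Lattice

section Multiplier

lemma Leps_nonneg {ε x : ℝ} (hx : 0 ≤ x) : 0 ≤ Leps ε x :=
  mul_nonneg (sq_nonneg _) (Real.log_nonneg (le_add_of_nonneg_right (by positivity)))

lemma Gfun_nonneg {c x : ℝ} (hc : 0 ≤ c) (hx : 0 ≤ x) : 0 ≤ Gfun c x :=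
  mul_nonneg (inv_nonneg.2 hc) <| sub_nonneg.2 <|
    Real.one_le_rpow (le_add_of_nonneg_left (by positivity)) (by norm_num)

variable {n : ℕ} (w : Fin 2 → ℝ) (ε : ℝ) (k : Fin n → ZLat 2)

lemma wdotSq_mul_Gfun_nonneg :
    0 ≤ wdotSq w k * Gfun (wnSq w) (Leps ε (wSq k / 2)) :=
  mul_nonneg (wdotSq_nonneg w k) <| Gfun_nonneg (wnSq_nonneg w) <| Leps_nonneg <|
    div_nonneg (wSq_nonneg k) zero_le_two

lemma abs_sigma'_le : |sigma' w ε k| ≤ 2 / wSq k := by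
  have hG := wdotSq_mul_Gfun_nonneg w ε k
  have hk := wSq_nonneg k
  rw [sigma', abs_of_nonneg (by positivity)]
  rcases hk.eq_or_lt with h0 | hpos
  · -- Both sides are the junk value `2 / 0`.
    have hw0 : wdotSq w k = 0 :=
      le_antisymm ((wdotSq_le w k).trans_eq (by rw [← h0, mul_zero])) (wdotSq_nonneg w k)
    rw [hw0, zero_mul, add_zero]
  · gcongr
    exact le_add_of_nonneg_right hG

end Multiplier

section Pairs

/-- The pairs of indices `i < j` over which the sum defining `A⁺_ε` runs. -/
abbrev IncPair (n : ℕ) := {p : Fin n × Fin n // p.1 < p.2}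

lemma card_incPair_le (n : ℕ) : Fintype.card (IncPair n) ≤ n ^ 2 := by
  simpa [sq] using Fintype.card_subtype_le fun p : Fin n × Fin n => p.1 < p.2

lemma sum_sum_dite_lt {M : Type*} [AddCommMonoid M] {n : ℕ} (F : ∀ i j : Fin n, i < j → M) :
    ∑ i, ∑ j, (if h : i < j then F i j h else 0) = ∑ p : IncPair n, F p.1.1 p.1.2 p.2 := by
  rw [← Fintype.sum_prod_type',
    ← Fintype.sum_subtype_add_sum_subtype fun x : Fin n × Fin n => x.1 < x.2,
    Fintype.sum_eq_zero _ fun x : {x : Fin n × Fin n // ¬x.1 < x.2} => dif_neg x.2, add_zero]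
  exact Fintype.sum_congr _ _ fun p => dif_pos p.2

variable {X : Type*} {n : ℕ}

lemma exists_remove2_eq {i j b : Fin (n + 2)} (h : i < j) (hi : b ≠ i) (hj : b ≠ j) :
    ∃ a, ∀ k : Fin (n + 2) → X, remove2 k i j h a = k b := by
  obtain ⟨c, rfl⟩ := Fin.exists_succAbove_eq hj
  have hlt : (i : ℕ) < n + 1 := by omega
  have hc : c ≠ Fin.castLT i hlt := by
    rintro rfl
    exact hi (by rw [Fin.succAbove_of_castSucc_lt _ _ (by simpa using h), Fin.castSucc_castLT])
  obtain ⟨a, rfl⟩ := Fin.exists_succAbove_eq hc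
  exact ⟨a, fun _ => rfl⟩

/-- The tuple `(k_i + k_j, k_{{1:n+2}∖{i,j}})` at which `A⁺_ε` evaluates the kernel. -/
def merge [Add X] (p : IncPair (n + 2)) (k : Fin (n + 2) → X) : Fin (n + 1) → X :=
  Fin.cons (k p.1.1 + k p.1.2) (remove2 k p.1.1 p.1.2 p.2)

lemma merge_zero [Add X] (p : IncPair (n + 2)) (k : Fin (n + 2) → X) :
    merge p k 0 = k p.1.1 + k p.1.2 :=
  rfl

lemma fst_prod_merge_injective [Add X] [IsLeftCancelAdd X] (p : IncPair (n + 2)) :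
    Function.Injective fun k : Fin (n + 2) → X => (k p.1.1, merge p k) := by
  intro k k' hk
  obtain ⟨hfst, hmerge⟩ := Prod.ext_iff.1 hk
  dsimp only at hfst hmerge
  have hsnd : k p.1.2 = k' p.1.2 := by
    have h0 := congrFun hmerge 0
    rw [merge_zero, merge_zero, hfst] at h0
    exact add_left_cancel h0
  funext b
  by_cases hi : b = p.1.1
  · rw [hi, hfst]
  by_cases hj : b = p.1.2
  · rw [hj, hsnd]
  obtain ⟨a, ha⟩ := exists_remove2_eq (X := X) p.2 hi hj
  rw [← ha k, ← ha k']
  exact congrFun hmerge a.succ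

variable [Add X] [IsLeftCancelAdd X] {F : X × (Fin (n + 1) → X) → ℝ}

lemma summable_sum_merge (hF : Summable F) :
    Summable fun k => ∑ p : IncPair (n + 2), F (k p.1.1, merge p k) :=
  summable_sum fun p _ => hF.comp_injective (fst_prod_merge_injective p)

lemma tsum_sum_merge_le (hF : Summable F) (hF0 : ∀ x, 0 ≤ F x) :
    ∑' k, ∑ p : IncPair (n + 2), F (k p.1.1, merge p k) ≤ ((n : ℝ) + 2) ^ 2 * ∑' x, F x := by
  have hcard : (Fintype.card (IncPair (n + 2)) : ℝ) ≤ ((n : ℝ) + 2) ^ 2 := by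
    exact_mod_cast card_incPair_le (n + 2)
  calc ∑' k, ∑ p : IncPair (n + 2), F (k p.1.1, merge p k)
      = ∑ p : IncPair (n + 2), ∑' k, F (k p.1.1, merge p k) :=
        Summable.tsum_finsetSum fun p _ => hF.comp_injective (fst_prod_merge_injective p)
    _ ≤ ∑ _p : IncPair (n + 2), ∑' x, F x :=
        Finset.sum_le_sum fun p _ =>
          tsum_comp_le_tsum_of_inj hF hF0 (fst_prod_merge_injective p)
    _ = Fintype.card (IncPair (n + 2)) * ∑' x, F x := by
        rw [Finset.sum_const, nsmul_eq_mul, Finset.card_univ]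
    _ ≤ ((n : ℝ) + 2) ^ 2 * ∑' x, F x := by
        gcongr
        exact tsum_nonneg hF0

end Pairs

section Creation

variable {d n : ℕ} (w : Fin d → ℝ) (ε : ℝ) (f : Chaos d (n + 1))

lemma lam_nonneg (d : ℕ) {ε : ℝ} (hε : 0 ≤ ε) : 0 ≤ lam d ε := by
  unfold lam
  split_ifs <;> positivity

lemma Jind_le_one (l m : ZLat d) : Jind d ε l m ≤ 1 := by
  unfold Jind
  split_ifs <;> norm_num

lemma Jind_nonneg (l m : ZLat d) : 0 ≤ Jind d ε l m := by
  unfold Jind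
  split_ifs <;> norm_num

lemma Jind_zero_left (m : ZLat d) : Jind d ε 0 m = 0 := by
  have h0 : cutNorm d 0 = 0 := by simp [cutNorm, eN, sN, nsq]
  rw [Jind, h0, mul_zero, if_neg fun h => h.1.false]

/-- The summand of `A⁺_ε f` belonging to the pair `i < j`, without the common prefactor. -/
def pairTerm (p : IncPair (n + 2)) (k : Fin (n + 2) → ZLat d) : ℂ :=
  (dotw w (k p.1.1 + k p.1.2) : ℂ) * (Jind d ε (k p.1.1) (k p.1.2) : ℂ) * f (merge p k)

lemma norm_sq_pairTerm_le (p : IncPair (n + 2)) (k : Fin (n + 2) → ZLat d) :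
    ‖pairTerm w ε f p k‖ ^ 2 ≤ wnSq w * (nsq (merge p k 0) * ‖f (merge p k)‖ ^ 2) := by
  have hJ : Jind d ε (k p.1.1) (k p.1.2) ^ 2 ≤ 1 :=
    pow_le_one₀ (Jind_nonneg ε _ _) (Jind_le_one ε _ _)
  have hw := dotw_sq_le w (merge p k 0)
  have hw0 := (sq_nonneg _).trans hw
  calc ‖pairTerm w ε f p k‖ ^ 2
      = dotw w (merge p k 0) ^ 2 * Jind d ε (k p.1.1) (k p.1.2) ^ 2 * ‖f (merge p k)‖ ^ 2 := by
        simp only [pairTerm, merge_zero, norm_mul, mul_pow, Complex.norm_real, Real.norm_eq_abs,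
          sq_abs]
    _ ≤ (wnSq w * nsq (merge p k 0)) * 1 * ‖f (merge p k)‖ ^ 2 := by gcongr
    _ = wnSq w * (nsq (merge p k 0) * ‖f (merge p k)‖ ^ 2) := by ring

lemma norm_Aplus_le {ε : ℝ} (hε : 0 ≤ ε) (k : Fin (n + 2) → ZLat d) :
    ‖Aplus d w ε f k‖ ≤ 2 * (lam d ε / ((n : ℝ) + 2)) * ∑ p, ‖pairTerm w ε f p k‖ := by
  have hlam : 0 ≤ lam d ε / ((n : ℝ) + 2) := div_nonneg (lam_nonneg d hε) (by positivity)
  have hpi : 1 ≤ (2 * Real.pi) ^ ((d : ℝ) / 2) :=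
    Real.one_le_rpow (by linarith [Real.pi_gt_three]) (by positivity)
  have hI : ‖-(2 * Complex.I / (((2 * Real.pi) ^ ((d : ℝ) / 2) : ℝ) : ℂ))‖ ≤ 2 := by
    rw [norm_neg, norm_div, norm_mul, Complex.norm_I, Complex.norm_ofNat, Complex.norm_real,
      Real.norm_of_nonneg (by positivity), mul_one]
    exact div_le_self zero_le_two hpi
  rw [Aplus, sum_sum_dite_lt, norm_mul, norm_mul, Complex.norm_real, Real.norm_of_nonneg hlam]
  gcongr
  exact norm_sum_le _ _

lemma norm_sq_Aplus_le {ε : ℝ} (hε : 0 ≤ ε) (k : Fin (n + 2) → ZLat d) :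
    ‖Aplus d w ε f k‖ ^ 2 ≤ 4 * lam d ε ^ 2 * ∑ p, ‖pairTerm w ε f p k‖ ^ 2 := by
  have hcard : (Fintype.card (IncPair (n + 2)) : ℝ) ≤ ((n : ℝ) + 2) ^ 2 := by
    exact_mod_cast card_incPair_le (n + 2)
  calc ‖Aplus d w ε f k‖ ^ 2
      ≤ (2 * (lam d ε / ((n : ℝ) + 2)) * ∑ p, ‖pairTerm w ε f p k‖) ^ 2 := by
        gcongr
        exact norm_Aplus_le w f hε k
    _ = (2 * (lam d ε / ((n : ℝ) + 2))) ^ 2 * (∑ p, ‖pairTerm w ε f p k‖) ^ 2 := mul_pow _ _ _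
    _ ≤ (2 * (lam d ε / ((n : ℝ) + 2))) ^ 2 *
          (((n : ℝ) + 2) ^ 2 * ∑ p, ‖pairTerm w ε f p k‖ ^ 2) := by
        gcongr
        exact sq_sum_le_card_mul_sum_sq.trans (by rw [Finset.card_univ]; gcongr)
    _ = 4 * lam d ε ^ 2 * ∑ p, ‖pairTerm w ε f p k‖ ^ 2 := by
        field_simp
        ring

/-- The function `|l|⁻⁴ |k_1|² |f(k)|²` dominating `(2 / |k|²)² |pairTerm|²`, up to a constant,
after the change of variables `k ↦ (k_i, merge k)`; the junk value `0⁻¹ = 0` at `l = 0` is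
harmless because the cutoff vanishes there. -/
def pairMajorant (x : ZLat d × (Fin (n + 1) → ZLat d)) : ℝ :=
  (nsq x.1)⁻¹ ^ 2 * (nsq (x.2 0) * ‖f x.2‖ ^ 2)

lemma pairMajorant_nonneg (x : ZLat d × (Fin (n + 1) → ZLat d)) : 0 ≤ pairMajorant f x :=
  mul_nonneg (sq_nonneg _) (mul_nonneg (nsq_nonneg _) (sq_nonneg _))

lemma two_div_wSq_sq_mul_norm_sq_pairTerm_le (p : IncPair (n + 2)) (k : Fin (n + 2) → ZLat d) :
    (2 / wSq k) ^ 2 * ‖pairTerm w ε f p k‖ ^ 2 ≤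
      4 * wnSq w * pairMajorant f (k p.1.1, merge p k) := by
  have hw := wnSq_nonneg w
  by_cases h0 : k p.1.1 = 0
  · have : pairTerm w ε f p k = 0 := by
      rw [pairTerm, h0, Jind_zero_left, Complex.ofReal_zero, mul_zero, zero_mul]
    rw [this, norm_zero, zero_pow two_ne_zero, mul_zero]
    exact mul_nonneg (by positivity) (pairMajorant_nonneg f _)
  · have hpos := nsq_pos h0
    calc (2 / wSq k) ^ 2 * ‖pairTerm w ε f p k‖ ^ 2
        ≤ (2 / nsq (k p.1.1)) ^ 2 *
            (wnSq w * (nsq (merge p k 0) * ‖f (merge p k)‖ ^ 2)) := by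
          gcongr
          · exact div_nonneg zero_le_two (wSq_nonneg k)
          · exact nsq_le_wSq k _
          · exact norm_sq_pairTerm_le w ε f p k
      _ = 4 * wnSq w * pairMajorant f (k p.1.1, merge p k) := by
          rw [pairMajorant]
          ring

end Creation

section Symmetric

variable {d n : ℕ} {ψ : Chaos d n}

lemma tsum_mul_norm_sq_eq_of_symm (hψ : Symm ψ) (g : ZLat d → ℝ) (a b : Fin n) :
    ∑' k, g (k a) * ‖ψ k‖ ^ 2 = ∑' k, g (k b) * ‖ψ k‖ ^ 2 := by
  rw [← (Equiv.arrowCongr (Equiv.swap a b) (Equiv.refl (ZLat d))).tsum_eq]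
  refine tsum_congr fun k => ?_
  have hk : Equiv.arrowCongr (Equiv.swap a b) (Equiv.refl (ZLat d)) k = k ∘ Equiv.swap a b := rfl
  rw [hk, hψ, Function.comp_apply, Equiv.swap_apply_left]

lemma sobTerm_nonneg (s : ℝ) (f : Chaos d n) (k : Fin n → ZLat d) : 0 ≤ sobTerm s f k :=
  mul_nonneg (Real.rpow_nonneg (div_nonneg (wSq_nonneg k) zero_le_two) _) (sq_nonneg _)

lemma two_mul_sobTerm_half (f : Chaos d n) (k : Fin n → ZLat d) :
    2 * sobTerm (1 / 2) f k = ∑ a, nsq (k a) * ‖f k‖ ^ 2 := by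
  rw [← Finset.sum_mul, ← wSq, sobTerm, mul_one_div_cancel two_ne_zero, Real.rpow_one]
  ring

lemma summable_nsq_mul_norm_sq (h : Summable (sobTerm (1 / 2) ψ)) (a : Fin n) :
    Summable fun k => nsq (k a) * ‖ψ k‖ ^ 2 := by
  have hnonneg (k : Fin n → ZLat d) (b : Fin n) : 0 ≤ nsq (k b) * ‖ψ k‖ ^ 2 :=
    mul_nonneg (nsq_nonneg _) (sq_nonneg _)
  refine Summable.of_nonneg_of_le (fun k => hnonneg k a) (fun k => ?_) (h.mul_left 2)
  rw [two_mul_sobTerm_half]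
  exact Finset.single_le_sum (f := fun b => nsq (k b) * ‖ψ k‖ ^ 2) (fun b _ => hnonneg k b)
    (Finset.mem_univ a)

lemma two_mul_tsum_sobTerm_half (hψ : Symm ψ) (h : Summable (sobTerm (1 / 2) ψ)) (a : Fin n) :
    2 * ∑' k, sobTerm (1 / 2) ψ k = n * ∑' k, nsq (k a) * ‖ψ k‖ ^ 2 := by
  calc 2 * ∑' k, sobTerm (1 / 2) ψ k
      = ∑' k, ∑ b, nsq (k b) * ‖ψ k‖ ^ 2 := by
        rw [← tsum_mul_left]
        exact tsum_congr (two_mul_sobTerm_half ψ)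
    _ = ∑ b, ∑' k, nsq (k b) * ‖ψ k‖ ^ 2 :=
        Summable.tsum_finsetSum fun b _ => summable_nsq_mul_norm_sq h b
    _ = ∑ _b : Fin n, ∑' k, nsq (k a) * ‖ψ k‖ ^ 2 :=
        Finset.sum_congr rfl fun b _ => tsum_mul_norm_sq_eq_of_symm hψ nsq b a
    _ = n * ∑' k, nsq (k a) * ‖ψ k‖ ^ 2 := by
        rw [Finset.sum_const, nsmul_eq_mul, Finset.card_univ, Fintype.card_fin]

end Symmetric

section Bound

variable {d n : ℕ} {ψ : Chaos d (n + 1)}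

lemma summable_pairMajorant (hd : d < 4) (h : Summable (sobTerm (1 / 2) ψ)) :
    Summable (pairMajorant ψ) :=
  (summable_inv_nsq_pow hd).mul_of_nonneg (summable_nsq_mul_norm_sq h 0)
    (fun _ => sq_nonneg _) fun _ => mul_nonneg (nsq_nonneg _) (sq_nonneg _)

lemma succ_mul_tsum_pairMajorant (hd : d < 4) (hψ : Symm ψ) (h : Summable (sobTerm (1 / 2) ψ)) :
    ((n : ℝ) + 1) * ∑' x, pairMajorant ψ x =
      2 * (∑' l : ZLat d, (nsq l)⁻¹ ^ 2) * ∑' k, sobTerm (1 / 2) ψ k := by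
  have hprod : (∑' l : ZLat d, (nsq l)⁻¹ ^ 2) * ∑' k, nsq (k 0) * ‖ψ k‖ ^ 2 =
      ∑' x, pairMajorant ψ x :=
    (summable_inv_nsq_pow hd).tsum_mul_tsum (summable_nsq_mul_norm_sq h 0)
      (summable_pairMajorant hd h)
  have hsym := two_mul_tsum_sobTerm_half hψ h 0
  push_cast at hsym
  rw [← hprod]
  linear_combination -(∑' l : ZLat d, (nsq l)⁻¹ ^ 2) * hsym

/-- The operator acting on kernels as the Fourier multiplier `σ`; `SepsA w ε` is
`fourierMul (sigma' w ε)`. -/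
def fourierMul (σ : (Fin n → ZLat d) → ℝ) (g : Chaos d n) : Chaos d n :=
  fun k => (σ k : ℂ) * g k

variable {w : Fin d → ℝ} {ε : ℝ} {σ : (Fin (n + 2) → ZLat d) → ℝ}

lemma sobTerm_fourierMul_Aplus_le (hε : 0 ≤ ε) (hσ : ∀ k, |σ k| ≤ 2 / wSq k)
    (k : Fin (n + 2) → ZLat d) :
    sobTerm 0 (fourierMul σ (Aplus d w ε ψ)) k ≤
      16 * lam d ε ^ 2 * wnSq w *
        ∑ p : IncPair (n + 2), pairMajorant ψ (k p.1.1, merge p k) := by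
  calc sobTerm 0 (fourierMul σ (Aplus d w ε ψ)) k
      = |σ k| ^ 2 * ‖Aplus d w ε ψ k‖ ^ 2 := by
        rw [sobTerm, fourierMul, mul_zero, Real.rpow_zero, one_mul, norm_mul, mul_pow,
          Complex.norm_real, Real.norm_eq_abs]
    _ ≤ (2 / wSq k) ^ 2 * (4 * lam d ε ^ 2 * ∑ p, ‖pairTerm w ε ψ p k‖ ^ 2) := by
        gcongr
        · exact hσ k
        · exact norm_sq_Aplus_le w ψ hε k
    _ = 4 * lam d ε ^ 2 * ∑ p, (2 / wSq k) ^ 2 * ‖pairTerm w ε ψ p k‖ ^ 2 := by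
        rw [← Finset.mul_sum]
        ring
    _ ≤ 4 * lam d ε ^ 2 *
          ∑ p : IncPair (n + 2), 4 * wnSq w * pairMajorant ψ (k p.1.1, merge p k) := by
        refine mul_le_mul_of_nonneg_left (Finset.sum_le_sum fun p _ => ?_) (by positivity)
        exact two_div_wSq_sq_mul_norm_sq_pairTerm_le w ε ψ p k
    _ = 16 * lam d ε ^ 2 * wnSq w *
          ∑ p : IncPair (n + 2), pairMajorant ψ (k p.1.1, merge p k) := by
        rw [← Finset.mul_sum]
        ring

lemma summable_sobTerm_fourierMul_Aplus (hd : d < 4) (hε : 0 ≤ ε)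
    (hσ : ∀ k, |σ k| ≤ 2 / wSq k) (h : Summable (sobTerm (1 / 2) ψ)) :
    Summable (sobTerm 0 (fourierMul σ (Aplus d w ε ψ))) :=
  Summable.of_nonneg_of_le (sobTerm_nonneg 0 _) (sobTerm_fourierMul_Aplus_le hε hσ)
    ((summable_sum_merge (summable_pairMajorant hd h)).mul_left _)

lemma tsum_sobTerm_fourierMul_Aplus_le (hd : d < 4) (hε : 0 ≤ ε)
    (hσ : ∀ k, |σ k| ≤ 2 / wSq k) (h : Summable (sobTerm (1 / 2) ψ)) :
    ∑' k, sobTerm 0 (fourierMul σ (Aplus d w ε ψ)) k ≤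
      16 * lam d ε ^ 2 * wnSq w * (((n : ℝ) + 2) ^ 2 * ∑' x, pairMajorant ψ x) := by
  have hw := wnSq_nonneg w
  have hM := summable_pairMajorant hd h
  refine ((summable_sobTerm_fourierMul_Aplus hd hε hσ h).tsum_le_tsum
    (sobTerm_fourierMul_Aplus_le hε hσ) ((summable_sum_merge hM).mul_left _)).trans ?_
  rw [tsum_mul_left]
  gcongr
  exact tsum_sum_merge_le hM (pairMajorant_nonneg ψ)

lemma sobSq_fourierMul_Aplus_le (hd : d < 4) (hε : 0 ≤ ε) (hσ : ∀ k, |σ k| ≤ 2 / wSq k)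
    (hψ : Symm ψ) (h : Summable (sobTerm (1 / 2) ψ)) :
    sobSq 0 (fourierMul σ (Aplus d w ε ψ)) ≤
      256 * wnSq w * (∑' l : ZLat d, (nsq l)⁻¹ ^ 2) * (lam d ε * ((n : ℝ) + 1)) ^ 2 *
        sobSq (1 / 2) ψ := by
  have hw := wnSq_nonneg w
  have hM0 : 0 ≤ ∑' x, pairMajorant ψ x := tsum_nonneg (pairMajorant_nonneg ψ)
  have hM := succ_mul_tsum_pairMajorant hd hψ h
  have hcube : ((n : ℝ) + 2) ^ 3 ≤ (2 * ((n : ℝ) + 1)) ^ 3 := by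
    gcongr
    linarith [n.cast_nonneg (α := ℝ)]
  unfold sobSq
  calc ((n + 2).factorial : ℝ) * ∑' k, sobTerm 0 (fourierMul σ (Aplus d w ε ψ)) k
      ≤ (n + 2).factorial *
          (16 * lam d ε ^ 2 * wnSq w * (((n : ℝ) + 2) ^ 2 * ∑' x, pairMajorant ψ x)) := by
        gcongr
        exact tsum_sobTerm_fourierMul_Aplus_le hd hε hσ h
    _ = ((n : ℝ) + 2) ^ 3 *
          ((n + 1).factorial * (16 * lam d ε ^ 2 * wnSq w * ∑' x, pairMajorant ψ x)) := by
        rw [Nat.factorial_succ (n + 1)]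
        push_cast
        ring
    _ ≤ (2 * ((n : ℝ) + 1)) ^ 3 *
          ((n + 1).factorial * (16 * lam d ε ^ 2 * wnSq w * ∑' x, pairMajorant ψ x)) := by
        gcongr
    _ = 256 * wnSq w * (∑' l : ZLat d, (nsq l)⁻¹ ^ 2) * (lam d ε * ((n : ℝ) + 1)) ^ 2 *
          ((n + 1).factorial * ∑' k, sobTerm (1 / 2) ψ k) := by
        linear_combination (128 * wnSq w * (lam d ε * ((n : ℝ) + 1)) ^ 2 *
          ((n + 1).factorial : ℝ)) * hM

end Bound

theorem stmt17_general {d : ℕ} (hd : d < 4) (w : Fin d → ℝ) :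
    ∃ C : ℝ, 0 < C ∧
      ∀ ε : ℝ, 0 < ε →
      ∀ (n : ℕ) (σ : (Fin (n + 2) → ZLat d) → ℝ), (∀ k, |σ k| ≤ 2 / wSq k) →
      ∀ ψ : Chaos d (n + 1),
        Symm ψ → Summable (sobTerm (1 / 2) ψ) →
        Summable (sobTerm 0 (fourierMul σ (Aplus d w ε ψ))) ∧
        Real.sqrt (sobSq 0 (fourierMul σ (Aplus d w ε ψ))) ≤
          C * lam d ε * ((n : ℝ) + 1) * Real.sqrt (sobSq (1 / 2) ψ) := by
  set K := 256 * wnSq w * ∑' l : ZLat d, (nsq l)⁻¹ ^ 2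
  have hK : 0 ≤ K :=
    mul_nonneg (mul_nonneg (by norm_num) (wnSq_nonneg w)) (tsum_nonneg fun _ => sq_nonneg _)
  refine ⟨Real.sqrt K + 1, by positivity, fun ε hε n σ hσ ψ hψ h =>
    ⟨summable_sobTerm_fourierMul_Aplus hd hε.le hσ h, ?_⟩⟩
  have hlam := lam_nonneg d hε.le
  calc Real.sqrt (sobSq 0 (fourierMul σ (Aplus d w ε ψ)))
      ≤ Real.sqrt (K * (lam d ε * ((n : ℝ) + 1)) ^ 2 * sobSq (1 / 2) ψ) :=
        Real.sqrt_le_sqrt (sobSq_fourierMul_Aplus_le hd hε.le hσ hψ h)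
    _ = Real.sqrt K * lam d ε * ((n : ℝ) + 1) * Real.sqrt (sobSq (1 / 2) ψ) := by
        rw [Real.sqrt_mul (by positivity), Real.sqrt_mul hK, Real.sqrt_sq (by positivity),
          ← mul_assoc]
    _ ≤ (Real.sqrt K + 1) * lam d ε * ((n : ℝ) + 1) * Real.sqrt (sobSq (1 / 2) ψ) := by
        gcongr
        exact le_add_of_nonneg_right zero_le_one

/-- `L²` bound for the ansatz operator, `d = 2`.
There is `C > 0`, independent of `ε` and `n`, such that for every `ε ∈ (0,1)`, every
`n ≥ 1` (chaos level `n+1` here) and every symmetric `ψ ∈ ΓL²_{n+1}` with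
`‖(−L₀)^{1/2}ψ‖ < ∞`, one has `‖S^ε A⁺_ε ψ‖ ≤ C λ_ε (n+1) ‖(−L₀)^{1/2}ψ‖`,
the left-hand norm being the Fock norm on `ΓL²_{n+2}`. -/
theorem stmt17 (w : Fin 2 → ℝ) (hw : w ≠ 0) :
    ∃ C : ℝ, 0 < C ∧
      ∀ ε : ℝ, 0 < ε → ε < 1 →
      ∀ (n : ℕ) (ψ : Chaos 2 (n+1)),
        Symm ψ → SuppOk ψ → Summable (sobTerm (1/2 : ℝ) ψ) →
        Summable (sobTerm (0 : ℝ) (SepsA w ε (Aplus 2 w ε ψ))) ∧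
        Real.sqrt (sobSq (0 : ℝ) (SepsA w ε (Aplus 2 w ε ψ))) ≤
          C * lam 2 ε * ((n:ℝ)+1) * Real.sqrt (sobSq (1/2 : ℝ) ψ) := by
  obtain ⟨C, hC, h⟩ := stmt17_general (by norm_num) w
  exact ⟨C, hC, fun ε hε _ n ψ hψ _ => h ε hε n _ (abs_sigma'_le w ε) ψ hψ⟩

end SBE
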